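/- For all η,η' ∈ ℂ and all w,x,y,z ∈ ℤ/3ℤ with y ≠ z, one has (1/2)·(M^{wx/yz}[η,η'] + M^{wx/zy}[η,η']) = (1/3)·(I + J + J²). -/

import Mathlib

/-!
The operators `S[η,η']` are simultaneously diagonalised by `W`, with eigenvalues `1, η', η`, hence
depend affinely on `(η, η')`. Exchanging `y` and `z` negates both parameters of the median operator,
so the mean of the two operators is `S[0,0]`, the projection onto the first column of `W` along the
other two. The columns of the Fourier matrix `W` are eigenvectors of the cyclic shift `J`, the
`j`-th with eigenvalue `ω ^ j`; since the powers of `ω ^ j` sum to zero for `j ≠ 0`, the same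
projection is the mean of the powers of `J`.
-/

noncomputable def ω : ℂ := Complex.exp (2 * Real.pi * Complex.I / 3)

def J : Matrix (Fin 3) (Fin 3) ℂ := !![0,1,0; 0,0,1; 1,0,0]

noncomputable def W : Matrix (Fin 3) (Fin 3) ℂ := !![1,1,1; 1,ω,ω^2; 1,ω^2,ω]

/-- generalized cevian operator `S[η,η'] = W ⬝ diag(1,η',η) ⬝ W⁻¹` -/
noncomputable def S (η η' : ℂ) : Matrix (Fin 3) (Fin 3) ℂ :=
  W * Matrix.diagonal ![1, η', η] * W⁻¹

/-- `ω^k` for `k : ZMod 3` (well defined since `ω^3 = 1`). -/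
noncomputable def ωz (k : ZMod 3) : ℂ := ω ^ k.val

/-- `J^k` for `k : ZMod 3` (well defined since `J^3 = 1`). -/
def Jz (k : ZMod 3) : Matrix (Fin 3) (Fin 3) ℂ := J ^ k.val

/-- generalized median operator `M^{wx/yz}[η,η']` -/
noncomputable def M (η η' : ℂ) (w x y z : ZMod 3) : Matrix (Fin 3) (Fin 3) ℂ :=
  S ((η * ωz (-x) - ωz (-w)) / (ωz (-z) - ωz (-y)))
    ((η' * ωz x - ωz w) / (ωz z - ωz y))

open Finset

section FourierMatrix

open Matrix

/-- The (unnormalised) matrix `(ζ ^ (i * j))` of the discrete Fourier transform of length `n`, for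
`ζ` an `n`-th root of unity. It generalises `W`. -/
def fourierMatrix {R : Type*} [CommRing R] (n : ℕ) (ζ : R) : Matrix (Fin n) (Fin n) R :=
  vandermonde fun i => ζ ^ (i : ℕ)

theorem geom_sum_eq_zero_of_pow_eq_one {R : Type*} [Ring R] [NoZeroDivisors R] {x : R} {n : ℕ}
    (hx : x ^ n = 1) (hx1 : x ≠ 1) : ∑ k ∈ range n, x ^ k = 0 := by
  have h : (∑ k ∈ range n, x ^ k) * (x - 1) = 0 := by rw [geom_sum_mul, hx, sub_self]
  exact (mul_eq_zero.1 h).resolve_right (sub_ne_zero.2 hx1)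

theorem pow_val_add_one_of_pow_eq_one {G : Type*} [Monoid G] {n : ℕ} [NeZero n] {ζ : G}
    (hζ : ζ ^ n = 1) (i : Fin n) : ζ ^ ((i + 1 : Fin n) : ℕ) = ζ ^ (i : ℕ) * ζ := by
  rw [Fin.val_add, Fin.val_one', Nat.add_mod_mod, ← pow_eq_pow_mod _ hζ, pow_succ]

theorem semiconjBy_fourierMatrix {R : Type*} [CommRing R] {n : ℕ} [NeZero n] {ζ : R}
    (hζ : ζ ^ n = 1) :
    SemiconjBy (fourierMatrix n ζ) (diagonal fun i : Fin n => ζ ^ (i : ℕ))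
      ((Equiv.addRight (1 : Fin n)).permMatrix R) := by
  ext i j
  rw [Equiv.Perm.permMatrix, PEquiv.toMatrix_toPEquiv_mul, submatrix_apply, mul_diagonal]
  simp only [fourierMatrix, vandermonde_apply, Equiv.coe_addRight, id,
    pow_val_add_one_of_pow_eq_one hζ, mul_pow]

theorem geom_sum_pow_of_isPrimitiveRoot {R : Type*} [CommRing R] [NoZeroDivisors R] {n : ℕ}
    [NeZero n] {ζ : R} (hζ : IsPrimitiveRoot ζ n) (i : Fin n) :
    ∑ k ∈ range n, (ζ ^ (i : ℕ)) ^ k = if i = 0 then (n : R) else 0 := by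
  split_ifs with hi
  · simp only [hi, Fin.val_zero, pow_zero, one_pow, sum_const, card_range, nsmul_one]
  · refine geom_sum_eq_zero_of_pow_eq_one ?_
      (hζ.pow_ne_one_of_pos_of_lt (Fin.val_ne_zero_iff.2 hi) i.isLt)
    rw [pow_right_comm, hζ.pow_eq_one, one_pow]

theorem sum_diagonal_pow_of_isPrimitiveRoot {R : Type*} [CommRing R] [NoZeroDivisors R] {n : ℕ}
    [NeZero n] {ζ : R} (hζ : IsPrimitiveRoot ζ n) :
    ∑ k ∈ range n, (diagonal fun i : Fin n => ζ ^ (i : ℕ)) ^ k =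
      (n : R) • diagonal (Pi.single 0 1) :=
  calc ∑ k ∈ range n, (diagonal fun i : Fin n => ζ ^ (i : ℕ)) ^ k
      = ∑ k ∈ range n, diagonalAddMonoidHom (Fin n) R fun i => (ζ ^ (i : ℕ)) ^ k :=
        sum_congr rfl fun k _ => diagonal_pow _ k
    _ = diagonal (∑ k ∈ range n, fun i : Fin n => (ζ ^ (i : ℕ)) ^ k) :=
        (map_sum (diagonalAddMonoidHom (Fin n) R) _ _).symm
    _ = diagonal ((n : R) • Pi.single 0 1) := by
        congr 1
        ext i
        rw [Finset.sum_apply, geom_sum_pow_of_isPrimitiveRoot hζ, Pi.smul_apply, Pi.single_apply,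
          smul_eq_mul, mul_ite, mul_one, mul_zero]
    _ = (n : R) • diagonal (Pi.single 0 1) := diagonal_smul _ _

theorem isUnit_det_fourierMatrix {K : Type*} [Field K] {n : ℕ} {ζ : K}
    (hζ : IsPrimitiveRoot ζ n) : IsUnit (fourierMatrix n ζ).det :=
  (det_vandermonde_ne_zero_iff.2 fun i j hij =>
    Fin.ext (hζ.pow_inj i.isLt j.isLt hij)).isUnit

theorem fourierMatrix_mul_diagonal_single_mul_inv {K : Type*} [Field K] {n : ℕ} [NeZero n] {ζ : K}
    (hζ : IsPrimitiveRoot ζ n) :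
    fourierMatrix n ζ * diagonal (Pi.single 0 1) * (fourierMatrix n ζ)⁻¹ =
      (1 / n : K) • ∑ k ∈ range n, (Equiv.addRight (1 : Fin n)).permMatrix K ^ k := by
  have hn : (n : K) ≠ 0 := hζ.neZero'.out
  have hsum : fourierMatrix n ζ * ((n : K) • diagonal (Pi.single 0 1)) =
      (∑ k ∈ range n, (Equiv.addRight (1 : Fin n)).permMatrix K ^ k) * fourierMatrix n ζ := by
    rw [← sum_diagonal_pow_of_isPrimitiveRoot hζ, mul_sum, sum_mul]
    exact sum_congr rfl fun k _ => (semiconjBy_fourierMatrix hζ.pow_eq_one).pow_right k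
  rw [one_div, eq_inv_smul_iff₀ hn, ← smul_mul_assoc, ← mul_smul_comm, hsum,
    mul_nonsing_inv_cancel_right _ _ (isUnit_det_fourierMatrix hζ)]

end FourierMatrix

theorem isPrimitiveRoot_ω : IsPrimitiveRoot ω 3 := by
  simpa only [ω, Nat.cast_ofNat] using Complex.isPrimitiveRoot_exp 3 three_ne_zero

theorem W_eq_fourierMatrix : W = fourierMatrix 3 ω := by
  have h4 : (ω ^ 2) ^ 2 = ω := by
    rw [← pow_mul, pow_succ, isPrimitiveRoot_ω.pow_eq_one, one_mul]
  ext i j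
  fin_cases i <;> fin_cases j <;> simp [W, fourierMatrix, Matrix.vandermonde_apply, h4]

theorem J_eq_permMatrix : J = (Equiv.addRight (1 : Fin 3)).permMatrix ℂ := by
  ext i j
  fin_cases i <;> fin_cases j <;> simp [J, Equiv.Perm.permMatrix, PEquiv.toMatrix_apply]

theorem S_zero_zero : S 0 0 = (1 / 3 : ℂ) • (1 + J + J ^ 2) := by
  have hdiag : ![(1 : ℂ), 0, 0] = Pi.single 0 1 := by
    ext i
    fin_cases i <;> rfl
  rw [S, hdiag, W_eq_fourierMatrix, fourierMatrix_mul_diagonal_single_mul_inv isPrimitiveRoot_ω,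
    ← J_eq_permMatrix, Nat.cast_ofNat, sum_range_succ, sum_range_succ, sum_range_one, pow_zero,
    pow_one]

theorem half_smul_S_add_S (a b c d : ℂ) :
    (1 / 2 : ℂ) • (S a b + S c d) = S ((a + c) / 2) ((b + d) / 2) := by
  have hdiag : (1 / 2 : ℂ) • (Matrix.diagonal ![1, b, a] + Matrix.diagonal ![1, d, c]) =
      Matrix.diagonal ![1, (b + d) / 2, (a + c) / 2] := by
    rw [Matrix.diagonal_add, ← Matrix.diagonal_smul]
    congr 1
    ext i
    fin_cases i <;> simp <;> ring
  rw [S, S, S, ← add_mul, ← mul_add, ← smul_mul_assoc, ← mul_smul_comm, hdiag]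

theorem div_sub_add_div_sub_swap {K : Type*} [DivisionRing K] (a u v : K) :
    a / (u - v) + a / (v - u) = 0 := by
  rw [← neg_sub u v, div_neg, add_neg_cancel]

theorem median_point_symmetry (η η' : ℂ) (w x y z : ZMod 3) (hyz : y ≠ z) :
    (1/2 : ℂ) • (M η η' w x y z + M η η' w x z y) =
      (1/3 : ℂ) • ((1 : Matrix (Fin 3) (Fin 3) ℂ) + J + J ^ 2) := by
  rw [M, M, half_smul_S_add_S, div_sub_add_div_sub_swap, div_sub_add_div_sub_swap, zero_div,
    S_zero_zero]
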